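/- arXiv:1002.0419 — 2 statements merged into one kernel-verified Lean document; each statement's English description precedes it below -/
import Mathlib

section
/- Let A be a commutative noetherian local ring, let x, y ∈ A be a regular exact pair of zero divisors, and let a, b ∈ A be such that a or b is weakly regular on the A-module A/(x, y). Then the A-submodule Q_{η_b,γ_a} = { ψ ∈ M_2(A) | ψη_b = γ_aξ for some ξ ∈ M_2(A) } of the module M_2(A) of 2×2 matrices over A is generated by the five matrices ψ_1 = [[0,1],[0,0]], ψ_2 = [[0,0],[x,b]], ψ_3 = [[0,0],[0,y]], ψ_4 = [[x,0],[0,0]], ψ_5 = [[a,0],[y,0]]. -/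
/-!
Formalization of results from "Construction of totally reflexive modules
from an exact pair of zero divisors" by Henrik Holm.
-/

noncomputable section

/-- Non-units `x, y` in `A` form an *exact pair of zero divisors* if
`Ann_A(x) = (y)` and `Ann_A(y) = (x)`. -/
def IsExactZeroDivisorPair {A : Type*} [CommRing A] (x y : A) : Prop :=
  ¬ IsUnit x ∧ ¬ IsUnit y ∧
    (∀ a : A, a * x = 0 ↔ a ∈ Ideal.span {y}) ∧
    (∀ a : A, a * y = 0 ↔ a ∈ Ideal.span {x})

open Matrix in
/-- The matrix `γ_a = [[x, a], [0, y]]`. -/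
def gammaMat {A : Type*} [CommRing A] (x y a : A) : Matrix (Fin 2) (Fin 2) A :=
  !![x, a; 0, y]

open Matrix in
/-- The matrix `η_a = [[y, -a], [0, x]]`. -/
def etaMat {A : Type*} [CommRing A] (x y a : A) : Matrix (Fin 2) (Fin 2) A :=
  !![y, -a; 0, x]

/-- `G_a`, the cokernel of `γ_a : A² → A²`. -/
abbrev Gmod {A : Type*} [CommRing A] (x y a : A) : Type _ :=
  (Fin 2 → A) ⧸ LinearMap.range (Matrix.toLin' (gammaMat x y a))

/-- `H_a`, the cokernel of `η_a : A² → A²`. -/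
abbrev Hmod {A : Type*} [CommRing A] (x y a : A) : Type _ :=
  (Fin 2 → A) ⧸ LinearMap.range (Matrix.toLin' (etaMat x y a))

/-!
Comparing the entries of `ψη_b = γ_aξ` other than the upper right one gives
`x ∣ y * ψ 0 0 - a * ψ 1 0` and `y ∣ x * ψ 1 1 - b * ψ 1 0`. Weak regularity of `a` or `b` on
`A/(x, y)` then forces `ψ 1 0 = u * x + v * y`, and `ψ - uψ₂ - vψ₅` satisfies the same
divisibilities with vanishing lower left entry. Since the pair is regular, `y` is weakly regular on
`A/(x)` and `x` on `A/(y)`, so the diagonal entries of this difference are multiples of `x` and `y`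
and are accounted for by `ψ₄` and `ψ₃`.
-/

/-- The submodule `Q_{α,β}` of matrices `ψ` such that `ψα = βξ` for some matrix `ξ`, that is, of
those `ψ` which carry the range of `α` into that of `β` and so induce a homomorphism
`coker α → coker β`. -/
def cokerHomLifts {A k l m n : Type*} [CommRing A] [Fintype l] [Fintype n]
    (α : Matrix n k A) (β : Matrix m l A) : Submodule A (Matrix m n A) :=
  (LinearMap.range (mulLeftLinearMap k A β)).comap (mulRightLinearMap m A α)

theorem mem_cokerHomLifts {A k l m n : Type*} [CommRing A] [Fintype l] [Fintype n]
    {α : Matrix n k A} {β : Matrix m l A} {ψ : Matrix m n A} :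
    ψ ∈ cokerHomLifts α β ↔ ∃ ξ : Matrix l k A, ψ * α = β * ξ :=
  exists_congr fun _ => eq_comm

section

variable {A : Type*} [CommRing A] {x y a b : A}

namespace IsExactZeroDivisorPair

theorem symm (h : IsExactZeroDivisorPair x y) : IsExactZeroDivisorPair y x :=
  ⟨h.2.1, h.1, h.2.2.2, h.2.2.1⟩

theorem mul_eq_zero (h : IsExactZeroDivisorPair x y) : x * y = 0 :=
  (h.2.2.2 x).2 (Ideal.mem_span_singleton_self x)

theorem dvd_of_mul_eq_zero (h : IsExactZeroDivisorPair x y) {c : A} (hc : y * c = 0) : x ∣ c :=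
  Ideal.mem_span_singleton.1 ((h.2.2.2 c).1 (mul_comm y c ▸ hc))

theorem dvd_of_dvd_mul (h : IsExactZeroDivisorPair x y)
    (hreg : Disjoint (Ideal.span {x}) (Ideal.span {y})) {c : A} (hc : x ∣ y * c) : x ∣ c :=
  h.dvd_of_mul_eq_zero <| Submodule.disjoint_def.1 hreg _
    (Ideal.mem_span_singleton.2 hc) (Ideal.mem_span_singleton.2 (dvd_mul_right y c))

end IsExactZeroDivisorPair

theorem mem_span_pair_of_dvd_mul_sub_mul {c p r : A}
    (hc : IsSMulRegular (A ⧸ Ideal.span {x, y}) c) (h : x ∣ y * p - c * r) :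
    r ∈ Ideal.span {x, y} := by
  obtain ⟨d, hd⟩ := h
  refine mem_of_isSMulRegular_quotient_of_smul_mem hc (Ideal.mem_span_pair.2 ⟨-d, p, ?_⟩)
  rw [smul_eq_mul]
  linear_combination hd

theorem mul_etaMat (ψ : Matrix (Fin 2) (Fin 2) A) :
    ψ * etaMat x y b =
      !![ψ 0 0 * y, ψ 0 1 * x - ψ 0 0 * b; ψ 1 0 * y, ψ 1 1 * x - ψ 1 0 * b] := by
  ext i j
  fin_cases i <;> fin_cases j <;> simp [etaMat, Matrix.mul_apply, sub_eq_neg_add]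

theorem gammaMat_mul (ξ : Matrix (Fin 2) (Fin 2) A) :
    gammaMat x y a * ξ =
      !![x * ξ 0 0 + a * ξ 1 0, x * ξ 0 1 + a * ξ 1 1; y * ξ 1 0, y * ξ 1 1] := by
  ext i j
  fin_cases i <;> fin_cases j <;> simp [gammaMat, Matrix.mul_apply]

theorem dvd_of_mem_cokerHomLifts_etaMat_gammaMat (h : IsExactZeroDivisorPair x y)
    {ψ : Matrix (Fin 2) (Fin 2) A} (hψ : ψ ∈ cokerHomLifts (etaMat x y b) (gammaMat x y a)) :
    x ∣ y * ψ 0 0 - a * ψ 1 0 ∧ y ∣ x * ψ 1 1 - b * ψ 1 0 := by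
  obtain ⟨ξ, hξ⟩ := mem_cokerHomLifts.1 hψ
  rw [mul_etaMat, gammaMat_mul] at hξ
  have h₀₀ : ψ 0 0 * y = x * ξ 0 0 + a * ξ 1 0 := congrFun₂ hξ 0 0
  have h₁₀ : ψ 1 0 * y = y * ξ 1 0 := congrFun₂ hξ 1 0
  have h₁₁ : ψ 1 1 * x - ψ 1 0 * b = y * ξ 1 1 := congrFun₂ hξ 1 1
  obtain ⟨t, ht⟩ : x ∣ ξ 1 0 - ψ 1 0 := h.dvd_of_mul_eq_zero (by linear_combination -h₁₀)
  exact ⟨⟨ξ 0 0 + a * t, by linear_combination h₀₀ + a * ht⟩,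
    ⟨ξ 1 1, by linear_combination h₁₁⟩⟩

/-- The generators `ψ₁, …, ψ₅` of `Q_{η_b,γ_a}`. -/
def etaGammaGenerators (x y a b : A) : Set (Matrix (Fin 2) (Fin 2) A) :=
  {!![0, 1; 0, 0], !![0, 0; x, b], !![0, 0; 0, y], !![x, 0; 0, 0], !![a, 0; y, 0]}

theorem mem_span_etaGammaGenerators {ψ : Matrix (Fin 2) (Fin 2) A} {u v : A}
    (h₁₀ : ψ 1 0 = u * x + v * y) (h₀₀ : x ∣ ψ 0 0 - v * a) (h₁₁ : y ∣ ψ 1 1 - u * b) :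
    ψ ∈ Submodule.span A (etaGammaGenerators x y a b) := by
  obtain ⟨p, hp⟩ := h₀₀
  obtain ⟨s, hs⟩ := h₁₁
  rw [sub_eq_iff_eq_add] at hp hs
  have hψ : ψ = ψ 0 1 • !![0, 1; 0, 0] + (u • !![0, 0; x, b] + (s • !![0, 0; 0, y] +
      (p • !![x, 0; 0, 0] + v • !![a, 0; y, 0]))) := by
    ext i j
    fin_cases i <;> fin_cases j <;> simp [h₁₀, hp, hs, mul_comm, add_comm]
  simp only [etaGammaGenerators, Submodule.mem_span_insert, Submodule.mem_span_singleton]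
  exact ⟨_, _, ⟨_, _, ⟨_, _, ⟨_, _, ⟨_, rfl⟩, rfl⟩, rfl⟩, rfl⟩, hψ⟩

theorem span_etaGammaGenerators_le (hxy : x * y = 0) :
    Submodule.span A (etaGammaGenerators x y a b) ≤
      cokerHomLifts (etaMat x y b) (gammaMat x y a) := by
  rw [Submodule.span_le]
  rintro ψ (rfl | rfl | rfl | rfl | rfl) <;>
    simp only [SetLike.mem_coe, mem_cokerHomLifts, mul_etaMat, gammaMat_mul]
  · exact ⟨!![0, 1; 0, 0], by simp⟩
  · exact ⟨0, by simp [hxy, mul_comm b x]⟩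
  · exact ⟨0, by simp [mul_comm y x, hxy]⟩
  · exact ⟨!![0, -b; 0, 0], by simp [hxy]⟩
  · exact ⟨!![0, 0; y, -b], by simp [mul_comm]⟩

theorem generators_of_Q_eta_gamma_general (h : IsExactZeroDivisorPair x y)
    (hreg : Disjoint (Ideal.span {x}) (Ideal.span {y}))
    (hab : IsSMulRegular (A ⧸ Ideal.span {x, y}) a ∨ IsSMulRegular (A ⧸ Ideal.span {x, y}) b) :
    cokerHomLifts (etaMat x y b) (gammaMat x y a) =
      Submodule.span A (etaGammaGenerators x y a b) := by
  refine le_antisymm (fun ψ hψ => ?_) (span_etaGammaGenerators_le h.mul_eq_zero)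
  obtain ⟨h₀, h₁⟩ := dvd_of_mem_cokerHomLifts_etaMat_gammaMat h hψ
  have hmem : ψ 1 0 ∈ Ideal.span {x, y} := by
    obtain ha | hb := hab
    · exact mem_span_pair_of_dvd_mul_sub_mul ha h₀
    · rw [Ideal.span_pair_comm] at hb ⊢
      exact mem_span_pair_of_dvd_mul_sub_mul hb h₁
  obtain ⟨u, v, huv⟩ := Ideal.mem_span_pair.1 hmem
  obtain ⟨c, hc⟩ := h₀
  obtain ⟨d, hd⟩ := h₁
  have h₀₀ : x ∣ ψ 0 0 - v * a :=
    h.dvd_of_dvd_mul hreg ⟨c + a * u, by linear_combination hc - a * huv⟩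
  have h₁₁ : y ∣ ψ 1 1 - u * b :=
    h.symm.dvd_of_dvd_mul hreg.symm ⟨d + b * v, by linear_combination hd - b * huv⟩
  exact mem_span_etaGammaGenerators huv.symm h₀₀ h₁₁

end

open Matrix in
/-- **Lemma (7.3).** Let `x, y` be a regular exact pair of zero divisors and
let `a, b ∈ A` be such that `a` or `b` is weakly regular on `A/(x, y)`. Then
the submodule `Q_{η_b,γ_a} = { ψ ∈ M₂(A) | ψη_b = γ_aξ for some ξ }` of
`M₂(A)` is generated by the five matrices `ψ₁, …, ψ₅`. -/
theorem generators_of_Q_eta_gamma {A : Type*} [CommRing A]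
    [IsNoetherianRing A] [IsLocalRing A] {x y : A}
    (hxy : IsExactZeroDivisorPair x y)
    (hreg : Ideal.span ({x} : Set A) ⊓ Ideal.span ({y} : Set A) = ⊥) {a b : A}
    (hab : (Function.Injective
        fun m : A ⧸ Ideal.span ({x, y} : Set A) => a • m) ∨
      (Function.Injective
        fun m : A ⧸ Ideal.span ({x, y} : Set A) => b • m)) :
    ∀ ψ : Matrix (Fin 2) (Fin 2) A,
      (∃ ξ : Matrix (Fin 2) (Fin 2) A, ψ * etaMat x y b = gammaMat x y a * ξ) ↔
        ψ ∈ Submodule.span A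
          ({!![0, 1; 0, 0], !![0, 0; x, b], !![0, 0; 0, y],
            !![x, 0; 0, 0], !![a, 0; y, 0]} :
              Set (Matrix (Fin 2) (Fin 2) A)) := by
  intro ψ
  rw [← mem_cokerHomLifts, generators_of_Q_eta_gamma_general hxy (disjoint_iff.2 hreg) hab]
  rfl
end
end

section
/- Let A be a commutative noetherian local ring, let x, y ∈ A be a regular exact pair of zero divisors, let a ∈ A be weakly regular on the A-module A/(x, y), and let b ∈ A be any element. Then there are isomorphisms of A-modules: (a) Hom_A(H_a, H_{ab}) ≅ Hom_A(G_{ab}, G_a) ≅ H_b; (b) Hom_A(G_a, G_{ab}) ≅ Hom_A(H_{ab}, H_a) ≅ G_b. -/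
/-!
Formalization of results from "Construction of totally reflexive modules
from an exact pair of zero divisors" by Henrik Holm.
-/

noncomputable section

/-!
Since `y` is regular on `A/(x)` and `a` is regular on `A/(x, y)`, the only solutions of
`a m + y r = 0` in `A/(x)` are the Koszul ones `(m, r) = v (y, -a)`. A homomorphism `G_a → G_c` is
induced by an upper triangular matrix `[[p, r], [0, s]]` subject to the single condition
`a p + y r = c s` in `A/(x)`. For `c = a b` this is a Koszul equation in `(p - b s, r)`, so the
homomorphism is determined by `v` and `s`, and likewise in the opposite direction. As changing
the sign of `a` does not change `G_a`, the module `H_a` is `G_a` with `x` and `y` interchanged.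
-/

section ExactPair

variable {A : Type*} [CommRing A] {x y a : A}

/-- A regular exact pair of zero divisors, up to the requirement that `x` and `y` be non-units.
The conditions `Ann(x) = (y)`, `Ann(y) = (x)` and `(x) ∩ (y) = 0` are together equivalent to
`x y = 0` along with the regularity of each of `x`, `y` modulo the other, which is the form
encoded here. -/
structure IsRegularExactPair (x y : A) : Prop where
  mul_eq_zero : x * y = 0
  left_dvd_of_dvd_mul : ∀ {c : A}, x ∣ y * c → x ∣ c
  right_dvd_of_dvd_mul : ∀ {c : A}, y ∣ x * c → y ∣ c

theorem IsExactZeroDivisorPair.isRegularExactPair (hxy : IsExactZeroDivisorPair x y)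
    (hreg : Ideal.span ({x} : Set A) ⊓ Ideal.span ({y} : Set A) = ⊥) :
    IsRegularExactPair x y := by
  obtain ⟨-, -, ann_x, ann_y⟩ := hxy
  simp only [Ideal.mem_span_singleton] at ann_x ann_y
  have eq_zero_of_dvd {z : A} (hx : x ∣ z) (hy : y ∣ z) : z = 0 :=
    (Submodule.eq_bot_iff _).1 hreg z
      ⟨Ideal.mem_span_singleton.2 hx, Ideal.mem_span_singleton.2 hy⟩
  refine ⟨(ann_y x).2 dvd_rfl, fun {c} hc => ?_, fun {c} hc => ?_⟩
  · rw [← ann_y, mul_comm]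
    exact eq_zero_of_dvd hc (dvd_mul_right y c)
  · rw [← ann_x, mul_comm]
    exact eq_zero_of_dvd (dvd_mul_right x c) hc

namespace IsRegularExactPair

theorem symm (h : IsRegularExactPair x y) : IsRegularExactPair y x :=
  ⟨by rw [mul_comm, h.mul_eq_zero], h.right_dvd_of_dvd_mul, h.left_dvd_of_dvd_mul⟩

theorem left_dvd_of_mul_eq_zero (h : IsRegularExactPair x y) {c : A} (hc : y * c = 0) : x ∣ c :=
  h.left_dvd_of_dvd_mul (hc ▸ dvd_zero x)

theorem exists_koszul_of_dvd (h : IsRegularExactPair x y)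
    (ha : IsSMulRegular (A ⧸ Ideal.span ({x, y} : Set A)) a) {m r : A}
    (hmr : x ∣ a * m + y * r) : ∃ v, x ∣ m - y * v ∧ x ∣ r + a * v := by
  obtain ⟨u, hu⟩ := hmr
  have ham : a • m ∈ Ideal.span ({x, y} : Set A) :=
    Ideal.mem_span_pair.2 ⟨u, -r, by rw [smul_eq_mul]; linear_combination -hu⟩
  obtain ⟨k, v, hkv⟩ := Ideal.mem_span_pair.1
    (mem_of_isSMulRegular_quotient_of_smul_mem ha ham)
  have hyr : x ∣ y * (r + a * v) := ⟨u - a * k, by linear_combination hu + a * hkv⟩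
  exact ⟨v, ⟨k, by linear_combination -hkv⟩, h.left_dvd_of_dvd_mul hyr⟩

end IsRegularExactPair

end ExactPair

namespace Gmod

variable {A : Type*} [CommRing A] {x y a b c p q r s p' q' : A}
variable {M : Type*} [AddCommGroup M] [Module A M]

/-- The class of the vector `(p, q)` in `G_a`. -/
def mk (x y a p q : A) : Gmod x y a := Submodule.Quotient.mk ![p, q]

theorem mk_add_mk : mk x y a p q + mk x y a p' q' = mk x y a (p + p') (q + q') := by
  rw [mk, mk, ← Submodule.Quotient.mk_add]
  simp [mk]

theorem smul_mk : c • mk x y a p q = mk x y a (c * p) (c * q) := by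
  rw [mk, ← Submodule.Quotient.mk_smul]
  simp [mk]

theorem mk_sub_mk : mk x y a p q - mk x y a p' q' = mk x y a (p - p') (q - q') := by
  rw [sub_eq_iff_eq_add, mk_add_mk, sub_add_cancel, sub_add_cancel]

theorem exists_eq_mk (m : Gmod x y a) : ∃ p q, m = mk x y a p q := by
  obtain ⟨v, rfl⟩ := Submodule.Quotient.mk_surjective _ m
  refine ⟨v 0, v 1, congrArg Submodule.Quotient.mk (funext fun i => ?_)⟩
  fin_cases i <;> rfl

theorem mem_range_gammaMat {v : Fin 2 → A} :
    v ∈ LinearMap.range (Matrix.toLin' (gammaMat x y a)) ↔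
      ∃ t, x ∣ v 0 - a * t ∧ v 1 = y * t := by
  have gammaMat_mulVec (w : Fin 2 → A) :
      Matrix.toLin' (gammaMat x y a) w = ![x * w 0 + a * w 1, y * w 1] := by
    ext i
    fin_cases i <;> simp [gammaMat, Matrix.mulVec, dotProduct]
  constructor
  · rintro ⟨w, rfl⟩
    exact ⟨w 1, by simp [gammaMat_mulVec], by simp [gammaMat_mulVec]⟩
  · rintro ⟨t, ⟨u, hu⟩, ht⟩
    refine ⟨![u, t], funext fun i => ?_⟩
    fin_cases i <;> simp [gammaMat_mulVec, ht, ← hu]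

theorem mk_eq_zero_iff : mk x y a p q = 0 ↔ ∃ t, x ∣ p - a * t ∧ q = y * t := by
  rw [mk, Submodule.Quotient.mk_eq_zero, mem_range_gammaMat]
  simp only [Matrix.cons_val_zero, Matrix.cons_val_one]

theorem mk_eq_mk_iff :
    mk x y a p q = mk x y a p' q' ↔ ∃ t, x ∣ p - p' - a * t ∧ q - q' = y * t := by
  rw [← sub_eq_zero, mk_sub_mk, mk_eq_zero_iff]

theorem mk_eq_mk_of_dvd_sub (hp : x ∣ p - p') : mk x y a p q = mk x y a p' q :=
  mk_eq_mk_iff.2 ⟨0, by simpa using hp, by simp⟩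

theorem mk_zero_zero : mk x y a 0 0 = 0 :=
  mk_eq_zero_iff.2 ⟨0, by simp, by simp⟩

theorem smul_mk_one_zero : x • mk x y a 1 0 = 0 := by
  rw [smul_mk, mk_eq_zero_iff]
  exact ⟨0, by simp, by simp⟩

theorem smul_mk_add_smul_mk : a • mk x y a 1 0 + y • mk x y a 0 1 = 0 := by
  rw [smul_mk, smul_mk, mk_add_mk, mk_eq_zero_iff]
  exact ⟨1, by simp, by simp⟩

theorem hom_ext {f g : Gmod x y a →ₗ[A] M} (h₁ : f (mk x y a 1 0) = g (mk x y a 1 0))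
    (h₂ : f (mk x y a 0 1) = g (mk x y a 0 1)) : f = g := by
  refine LinearMap.ext fun m => ?_
  obtain ⟨p, q, rfl⟩ := exists_eq_mk m
  have decomp : mk x y a p q = p • mk x y a 1 0 + q • mk x y a 0 1 := by
    rw [smul_mk, smul_mk, mk_add_mk]
    simp only [mul_one, mul_zero, add_zero, zero_add]
  simp only [decomp, map_add, map_smul, h₁, h₂]

/-- The universal property of `G_a`: the linear map out of `G_a` which sends the two standard
generators to elements `m₁`, `m₂` satisfying the defining relations. -/
def lift (m₁ m₂ : M) (h₁ : x • m₁ = 0) (h₂ : a • m₁ + y • m₂ = 0) : Gmod x y a →ₗ[A] M :=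
  Submodule.liftQ _ (Fintype.linearCombination A ![m₁, m₂]) <| by
    intro v hv
    obtain ⟨t, ⟨u, hu⟩, ht⟩ := mem_range_gammaMat.1 hv
    calc Fintype.linearCombination A ![m₁, m₂] v
        = (x * u + a * t) • m₁ + (y * t) • m₂ := by
          simp [Fintype.linearCombination_apply, ← hu, ht]
      _ = u • (x • m₁) + t • (a • m₁ + y • m₂) := by module
      _ = 0 := by rw [h₁, h₂, smul_zero, smul_zero, add_zero]

theorem lift_mk {m₁ m₂ : M} (h₁ : x • m₁ = 0) (h₂ : a • m₁ + y • m₂ = 0) :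
    lift m₁ m₂ h₁ h₂ (mk x y a p q) = p • m₁ + q • m₂ := by
  simp [lift, mk, Fintype.linearCombination_apply]

/-- The homomorphism `G_a → G_c` induced by the matrix `[[p, r], [0, s]]`. -/
def triangularHom (p r s : A) (h : x ∣ a * p + y * r - c * s) : Gmod x y a →ₗ[A] Gmod x y c :=
  lift (mk x y c p 0) (mk x y c r s)
    (by rw [smul_mk, mk_eq_zero_iff]; exact ⟨0, by simp, by simp⟩)
    (by rw [smul_mk, smul_mk, mk_add_mk, mk_eq_zero_iff]; exact ⟨s, h, by ring⟩)

theorem triangularHom_mk (h : x ∣ a * p + y * r - c * s) :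
    triangularHom p r s h (mk x y a p' q') = mk x y c (p * p' + r * q') (s * q') := by
  rw [triangularHom, lift_mk, smul_mk, smul_mk, mk_add_mk]
  congr 1 <;> ring

theorem triangularHom_mk_one_zero (h : x ∣ a * p + y * r - c * s) :
    triangularHom p r s h (mk x y a 1 0) = mk x y c p 0 := by
  simp only [triangularHom_mk, mul_one, mul_zero, add_zero]

theorem triangularHom_mk_zero_one (h : x ∣ a * p + y * r - c * s) :
    triangularHom p r s h (mk x y a 0 1) = mk x y c r s := by
  simp only [triangularHom_mk, mul_one, mul_zero, zero_add]

/-- The isomorphism `G_a ≅ G_{-a}` which changes the sign of the first generator. -/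
def negEquiv (x y a : A) : Gmod x y a ≃ₗ[A] Gmod x y (-a) :=
  LinearEquiv.ofLinearMap (triangularHom (-1) 0 1 (by simp)) (triangularHom (-1) 0 1 (by simp))
    (hom_ext (by simp [triangularHom_mk]) (by simp [triangularHom_mk]))
    (hom_ext (by simp [triangularHom_mk]) (by simp [triangularHom_mk]))

theorem mk_zero_right_eq_zero_iff (h : IsRegularExactPair x y) :
    mk x y a p 0 = 0 ↔ x ∣ p := by
  rw [mk_eq_zero_iff]
  constructor
  · rintro ⟨t, hp, ht⟩
    have hxt : x ∣ t := h.left_dvd_of_mul_eq_zero ht.symm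
    exact (dvd_sub_left (hxt.mul_left a)).1 hp
  · exact fun hp => ⟨0, by simpa using hp, by simp⟩

theorem exists_eq_mk_zero_of_smul_eq_zero (h : IsRegularExactPair x y) {m : Gmod x y a}
    (hm : x • m = 0) : ∃ p, m = mk x y a p 0 := by
  obtain ⟨p, q, rfl⟩ := exists_eq_mk m
  rw [smul_mk, mk_eq_zero_iff] at hm
  obtain ⟨t, -, hq⟩ := hm
  obtain ⟨d, rfl⟩ : y ∣ q := h.right_dvd_of_dvd_mul ⟨t, hq⟩
  exact ⟨p - a * d, mk_eq_mk_iff.2 ⟨d, by simp, by ring⟩⟩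

theorem triangularHom_eq_zero_iff (hxy : IsRegularExactPair x y)
    (h : x ∣ a * p + y * r - c * s) :
    triangularHom p r s h = 0 ↔ x ∣ p ∧ mk x y c r s = 0 := by
  rw [← mk_zero_right_eq_zero_iff (a := c) hxy, ← triangularHom_mk_one_zero h,
    ← triangularHom_mk_zero_one h]
  constructor
  · intro h₀
    simp only [h₀, LinearMap.zero_apply, and_self]
  · exact fun ⟨h₁, h₂⟩ => hom_ext h₁ h₂

theorem exists_eq_triangularHom (hxy : IsRegularExactPair x y)
    (f : Gmod x y a →ₗ[A] Gmod x y c) :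
    ∃ p r s, ∃ h : x ∣ a * p + y * r - c * s, f = triangularHom p r s h := by
  obtain ⟨p, hp⟩ : ∃ p, f (mk x y a 1 0) = mk x y c p 0 :=
    exists_eq_mk_zero_of_smul_eq_zero hxy (by rw [← map_smul, smul_mk_one_zero, map_zero])
  obtain ⟨r, s, hrs⟩ := exists_eq_mk (f (mk x y a 0 1))
  have relation : a • f (mk x y a 1 0) + y • f (mk x y a 0 1) = 0 := by
    rw [← map_smul, ← map_smul, ← map_add, smul_mk_add_smul_mk, map_zero]
  rw [hp, hrs, smul_mk, smul_mk, mk_add_mk, mk_eq_zero_iff] at relation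
  obtain ⟨t, ⟨u, hu⟩, ht⟩ := relation
  obtain ⟨w, hw⟩ : x ∣ s - t := hxy.left_dvd_of_mul_eq_zero (by linear_combination ht)
  have h : x ∣ a * p + y * r - c * s := ⟨u - c * w, by linear_combination hu - c * hw⟩
  exact ⟨p, r, s, h, hom_ext (hp.trans (triangularHom_mk_one_zero h).symm)
    (hrs.trans (triangularHom_mk_zero_one h).symm)⟩

/-- The comparison map `G_b → Hom(G_a, G_{ab})`; it sends the class of `(p, q)` to the
homomorphism induced by the matrix `[[b q - y p, a p], [0, q]]`. -/
def toHomMul (hxy : IsRegularExactPair x y) (a b : A) :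
    Gmod x y b →ₗ[A] Gmod x y a →ₗ[A] Gmod x y (a * b) :=
  lift (triangularHom (-y) a 0 ⟨0, by ring⟩) (triangularHom b 0 1 ⟨0, by ring⟩)
    (hom_ext
      (by simp [triangularHom_mk, smul_mk, hxy.mul_eq_zero, mk_zero_zero])
      (by
        simp only [LinearMap.smul_apply, triangularHom_mk_zero_one, smul_mk, mul_zero,
          LinearMap.zero_apply]
        exact (mk_zero_right_eq_zero_iff hxy).2 (dvd_mul_right x a)))
    (hom_ext
      (by simp [triangularHom_mk, smul_mk, mk_add_mk, mul_comm b y, mk_zero_zero])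
      (by
        simp only [LinearMap.add_apply, LinearMap.smul_apply, triangularHom_mk_zero_one, smul_mk,
          mk_add_mk, LinearMap.zero_apply]
        exact mk_eq_zero_iff.2 ⟨1, ⟨0, by ring⟩, by ring⟩))

theorem toHomMul_mk (hxy : IsRegularExactPair x y) :
    toHomMul hxy a b (mk x y b p q) =
      triangularHom (b * q - y * p) (a * p) q ⟨0, by ring⟩ := by
  rw [toHomMul, lift_mk]
  apply hom_ext <;>
    simp only [LinearMap.add_apply, LinearMap.smul_apply, triangularHom_mk, smul_mk, mk_add_mk] <;>
    congr 1 <;> ring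

theorem toHomMul_injective (hxy : IsRegularExactPair x y) :
    Function.Injective (toHomMul hxy a b) := by
  rw [injective_iff_map_eq_zero]
  intro m hm
  obtain ⟨p, q, rfl⟩ := exists_eq_mk m
  rw [toHomMul_mk, triangularHom_eq_zero_iff hxy, mk_eq_zero_iff] at hm
  obtain ⟨⟨u, hu⟩, t, -, rfl⟩ := hm
  have hpt : x ∣ y * (p - b * t) := ⟨-u, by linear_combination -hu⟩
  exact mk_eq_zero_iff.2 ⟨t, hxy.left_dvd_of_dvd_mul hpt, rfl⟩

theorem toHomMul_surjective (hxy : IsRegularExactPair x y)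
    (ha : IsSMulRegular (A ⧸ Ideal.span ({x, y} : Set A)) a) :
    Function.Surjective (toHomMul hxy a b) := by
  intro f
  obtain ⟨p, r, s, h, rfl⟩ := exists_eq_triangularHom hxy f
  have koszul : x ∣ a * (p - b * s) + y * r := by convert h using 1; ring
  obtain ⟨v, hp, hr⟩ := hxy.exists_koszul_of_dvd ha koszul
  refine ⟨mk x y b (-v) s, ?_⟩
  rw [toHomMul_mk]
  refine hom_ext ?_ ?_
  · rw [triangularHom_mk_one_zero, triangularHom_mk_one_zero]
    exact mk_eq_mk_of_dvd_sub (by rw [dvd_sub_comm]; convert hp using 1; ring)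
  · rw [triangularHom_mk_zero_one, triangularHom_mk_zero_one]
    exact mk_eq_mk_of_dvd_sub (by rw [dvd_sub_comm]; convert hr using 1; ring)

/-- The comparison map `G'_b → Hom(G_{ab}, G_a)`, where `G'_b` is `G_b` with `x` and `y`
interchanged; it sends the class of `(p, q)` to the homomorphism induced by the matrix
`[[q, 0], [0, b q - x p]]`. -/
def toHomOfMul (hxy : IsRegularExactPair x y) (a b : A) :
    Gmod y x b →ₗ[A] Gmod x y (a * b) →ₗ[A] Gmod x y a :=
  lift (triangularHom 0 0 (-x) (by simp)) (triangularHom 1 0 b ⟨0, by ring⟩)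
    (hom_ext
      (by simp [triangularHom_mk, mk_zero_zero])
      (by simp [triangularHom_mk, smul_mk, hxy.symm.mul_eq_zero, mk_zero_zero]))
    (hom_ext
      (by simp [triangularHom_mk, smul_mk, mk_add_mk, mk_zero_right_eq_zero_iff hxy])
      (by simp [triangularHom_mk, smul_mk, mk_add_mk, mul_comm b x, mk_zero_zero]))

theorem toHomOfMul_mk (hxy : IsRegularExactPair x y) :
    toHomOfMul hxy a b (mk y x b p q) =
      triangularHom q 0 (b * q - x * p) ⟨a * p, by ring⟩ := by
  rw [toHomOfMul, lift_mk]
  apply hom_ext <;>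
    simp only [LinearMap.add_apply, LinearMap.smul_apply, triangularHom_mk, smul_mk, mk_add_mk] <;>
    congr 1 <;> ring

theorem toHomOfMul_injective (hxy : IsRegularExactPair x y) :
    Function.Injective (toHomOfMul hxy a b) := by
  rw [injective_iff_map_eq_zero]
  intro m hm
  obtain ⟨p, q, rfl⟩ := exists_eq_mk m
  rw [toHomOfMul_mk, triangularHom_eq_zero_iff hxy, mk_eq_zero_iff] at hm
  obtain ⟨⟨u, rfl⟩, t, -, ht⟩ := hm
  have hpu : y ∣ x * (p - b * u) := ⟨-t, by linear_combination -ht⟩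
  exact mk_eq_zero_iff.2 ⟨u, hxy.right_dvd_of_dvd_mul hpu, rfl⟩

theorem toHomOfMul_surjective (hxy : IsRegularExactPair x y)
    (ha : IsSMulRegular (A ⧸ Ideal.span ({x, y} : Set A)) a) :
    Function.Surjective (toHomOfMul hxy a b) := by
  intro f
  obtain ⟨p, r, s, h, rfl⟩ := exists_eq_triangularHom hxy f
  have koszul : x ∣ a * (b * p - s) + y * r := by convert h using 1; ring
  obtain ⟨v, ⟨k, hs⟩, hr⟩ := hxy.exists_koszul_of_dvd ha koszul
  refine ⟨mk y x b k p, ?_⟩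
  rw [toHomOfMul_mk]
  refine hom_ext ?_ ?_
  · rw [triangularHom_mk_one_zero, triangularHom_mk_one_zero]
  · rw [triangularHom_mk_zero_one, triangularHom_mk_zero_one, mk_eq_mk_iff]
    refine ⟨v, ?_, by linear_combination hs⟩
    rw [← dvd_neg]
    convert hr using 1
    ring

/-- The isomorphism `G_b ≅ Hom(G_a, G_{ab})`. -/
def equivHomMul (hxy : IsRegularExactPair x y)
    (ha : IsSMulRegular (A ⧸ Ideal.span ({x, y} : Set A)) a) (b : A) :
    Gmod x y b ≃ₗ[A] (Gmod x y a →ₗ[A] Gmod x y (a * b)) :=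
  LinearEquiv.ofBijective (toHomMul hxy a b)
    ⟨toHomMul_injective hxy, toHomMul_surjective hxy ha⟩

/-- The isomorphism `G'_b ≅ Hom(G_{ab}, G_a)`, where `G'_b` is `G_b` with `x` and `y`
interchanged. -/
def equivHomOfMul (hxy : IsRegularExactPair x y)
    (ha : IsSMulRegular (A ⧸ Ideal.span ({x, y} : Set A)) a) (b : A) :
    Gmod y x b ≃ₗ[A] (Gmod x y (a * b) →ₗ[A] Gmod x y a) :=
  LinearEquiv.ofBijective (toHomOfMul hxy a b)
    ⟨toHomOfMul_injective hxy, toHomOfMul_surjective hxy ha⟩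

end Gmod

/-- The module `H_a` of the pair `(x, y)` is isomorphic to the module `G_a` of the pair `(y, x)`;
it is literally equal to `G_{-a}` of that pair. -/
def Hmod.equivGmod {A : Type*} [CommRing A] (x y a : A) : Hmod x y a ≃ₗ[A] Gmod y x a :=
  (Gmod.negEquiv y x a).symm

theorem hom_G_mul_G_iso_general {A : Type*} [CommRing A] {x y : A}
    (hxy : IsRegularExactPair x y) {a : A}
    (ha : IsSMulRegular (A ⧸ Ideal.span ({x, y} : Set A)) a) (b : A) :
    Nonempty ((Hmod x y a →ₗ[A] Hmod x y (a * b)) ≃ₗ[A] Hmod x y b) ∧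
    Nonempty ((Gmod x y (a * b) →ₗ[A] Gmod x y a) ≃ₗ[A] Hmod x y b) ∧
    Nonempty ((Gmod x y a →ₗ[A] Gmod x y (a * b)) ≃ₗ[A] Gmod x y b) ∧
    Nonempty ((Hmod x y (a * b) →ₗ[A] Hmod x y a) ≃ₗ[A] Gmod x y b) := by
  have ha' : IsSMulRegular (A ⧸ Ideal.span ({y, x} : Set A)) a := by rwa [Set.pair_comm]
  let e (c : A) := Hmod.equivGmod x y c
  exact ⟨⟨(e a).arrowCongr (e (a * b)) ≪≫ₗ (Gmod.equivHomMul hxy.symm ha' b).symm ≪≫ₗ (e b).symm⟩,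
    ⟨(Gmod.equivHomOfMul hxy ha b).symm ≪≫ₗ (e b).symm⟩,
    ⟨(Gmod.equivHomMul hxy ha b).symm⟩,
    ⟨(e (a * b)).arrowCongr (e a) ≪≫ₗ (Gmod.equivHomOfMul hxy.symm ha' b).symm⟩⟩

/-- **Theorem (7.7).** Let `x, y` be a regular exact pair of zero divisors,
let `a ∈ A` be weakly regular on `A/(x, y)` and let `b ∈ A` be any element.
Then (a) `Hom_A(H_a, H_{ab}) ≅ Hom_A(G_{ab}, G_a) ≅ H_b` and
(b) `Hom_A(G_a, G_{ab}) ≅ Hom_A(H_{ab}, H_a) ≅ G_b`. -/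
theorem hom_G_mul_G_iso {A : Type*} [CommRing A] [IsNoetherianRing A]
    [IsLocalRing A] {x y : A} (hxy : IsExactZeroDivisorPair x y)
    (hreg : Ideal.span ({x} : Set A) ⊓ Ideal.span ({y} : Set A) = ⊥) {a : A}
    (ha : Function.Injective
      fun m : A ⧸ Ideal.span ({x, y} : Set A) => a • m) (b : A) :
    Nonempty ((Hmod x y a →ₗ[A] Hmod x y (a * b)) ≃ₗ[A] Hmod x y b) ∧
    Nonempty ((Gmod x y (a * b) →ₗ[A] Gmod x y a) ≃ₗ[A] Hmod x y b) ∧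
    Nonempty ((Gmod x y a →ₗ[A] Gmod x y (a * b)) ≃ₗ[A] Gmod x y b) ∧
    Nonempty ((Hmod x y (a * b) →ₗ[A] Hmod x y a) ≃ₗ[A] Gmod x y b) :=
  hom_G_mul_G_iso_general (hxy.isRegularExactPair hreg) ha b
end
end
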